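/- Let (W,T) be an affine dual Coxeter system of rank n+1 arising from a crystallographic root system Φ, let x ∈ W with ℓ_T(x) = m ≥ n+1, and let (s_{β_1,k_1},…,s_{β_m,k_m}) ∈ Red_T(x). Then there exist roots β'_i ∈ Φ and integers k'_i ∈ ℤ such that (s_{β_1,k_1},…,s_{β_m,k_m}) is Hurwitz equivalent to (s_{β'_1,k'_1},…,s_{β'_{m−1},k'_{m−1}}, s_{β'_{m−1},k'_m}), i.e. to a reduced factorization whose last two reflections have the same root. -/

import Mathlib

open scoped RealInnerProductSpace

noncomputable section

variable {V : Type*} [NormedAddCommGroup V] [InnerProductSpace ℝ V]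

/-- The coroot `α^∨ = 2α/(α|α)` of a vector `α`. -/
def coroot (α : V) : V := (2 / ⟪α, α⟫) • α

/-- The affine reflection `s_{α,k} : v ↦ v - ((v|α) - k)α^∨`, as a function. -/
def sAffFun (α : V) (k : ℝ) (v : V) : V := v - (⟪v, α⟫ - k) • coroot α

theorem sAffFun_involutive (α : V) (k : ℝ) : Function.Involutive (sAffFun α k) := by
  intro v
  by_cases h : α = 0
  · simp [sAffFun, coroot, h]
  · have h2 : ⟪α, α⟫ ≠ 0 := by
      intro hz
      exact h (inner_self_eq_zero.mp hz)
    have hr : ⟪coroot α, α⟫ = 2 := by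
      simp only [coroot, real_inner_smul_left]
      field_simp
    simp only [sAffFun, inner_sub_left, real_inner_smul_left, hr]
    have : ⟪v, α⟫ - (⟪v, α⟫ - k) * 2 - k = -(⟪v, α⟫ - k) := by ring
    rw [this, neg_smul, sub_neg_eq_add, sub_add_cancel]

/-- The affine reflection `s_{α,k}` as a permutation of `V`. -/
def sAff (α : V) (k : ℝ) : Equiv.Perm V :=
  Function.Involutive.toPerm _ (sAffFun_involutive α k)

/-- The translation `Tr(x) : v ↦ v + x`, as a function. -/
def trFun (x : V) (v : V) : V := v + x

/-- The translation `Tr(x) : v ↦ v + x`, as a permutation of `V`. -/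
def trPerm (x : V) : Equiv.Perm V := Equiv.addRight x

/-- A crystallographic (reduced) root system in a Euclidean space `V`. -/
structure IsCrystRootSystem (Φ : Set V) : Prop where
  finite : Φ.Finite
  nonempty : Φ.Nonempty
  ne_zero : ∀ α ∈ Φ, α ≠ 0
  spanning : Submodule.span ℝ Φ = ⊤
  refl_mem : ∀ α ∈ Φ, ∀ β ∈ Φ, sAffFun α 0 β ∈ Φ
  reduced : ∀ α ∈ Φ, ∀ c : ℝ, c • α ∈ Φ → c = 1 ∨ c = -1
  cryst : ∀ α ∈ Φ, ∀ β ∈ Φ, ∃ n : ℤ, 2 * ⟪β, α⟫ / ⟪α, α⟫ = (n : ℝ)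

/-- The (finite) Weyl group of `Φ`, generated by the reflections `s_α`. -/
def WeylGroup (Φ : Set V) : Subgroup (Equiv.Perm V) :=
  Subgroup.closure {g | ∃ α ∈ Φ, g = sAff α 0}

/-- The affine Weyl group of `Φ`, generated by all affine reflections `s_{α,k}`, `k ∈ ℤ`. -/
def AffWeylGroup (Φ : Set V) : Subgroup (Equiv.Perm V) :=
  Subgroup.closure {g | ∃ α ∈ Φ, ∃ k : ℤ, g = sAff α k}

/-- The set of reflections of the affine Weyl group. -/
def AffReflections (Φ : Set V) : Set (Equiv.Perm V) :=
  {g | ∃ α ∈ Φ, ∃ k : ℤ, g = sAff α k}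

/-- The coweight lattice `P(Φ^∨) = {x | (x|α) ∈ ℤ for all α ∈ Φ}`. -/
def coweightLattice (Φ : Set V) : Set V :=
  {x | ∀ α ∈ Φ, ∃ n : ℤ, ⟪x, α⟫ = (n : ℝ)}

/-- `Φ` is irreducible: it admits no decomposition into two nonempty orthogonal parts. -/
def IsIrreducibleRS (Φ : Set V) : Prop :=
  ∀ Φ₁ Φ₂ : Set V, Φ₁ ∪ Φ₂ = Φ → (∀ α ∈ Φ₁, ∀ β ∈ Φ₂, ⟪α, β⟫ = 0) →
    Φ₁ = ∅ ∨ Φ₂ = ∅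

section Hurwitz

variable {G : Type*} [Group G]

/-- One Hurwitz move: replace two adjacent entries `(a, b)` by `(a * b * a⁻¹, a)`. -/
def HurwitzMove (l l' : List G) : Prop :=
  ∃ (u v : List G) (a b : G),
    l = u ++ a :: b :: v ∧ l' = u ++ (a * b * a⁻¹) :: a :: v

/-- Hurwitz equivalence: two tuples are Hurwitz equivalent iff they lie in the same
orbit of the Hurwitz action of the braid group. -/
def HurwitzEquiv (l l' : List G) : Prop := Relation.EqvGen HurwitzMove l l'

/-- The reflection length `ℓ_T(w)` of `w` with respect to a generating set `T`. -/
noncomputable def reflLength (T : Set G) (w : G) : ℕ :=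
  sInf {k | ∃ l : List G, (∀ t ∈ l, t ∈ T) ∧ l.prod = w ∧ l.length = k}

/-- `l` is a reduced `T`-factorization of `w`, i.e. an element of `Red_T(w)`. -/
def IsRedFac (T : Set G) (w : G) (l : List G) : Prop :=
  (∀ t ∈ l, t ∈ T) ∧ l.prod = w ∧ l.length = reflLength T w

end Hurwitz


namespace S9

theorem gain_ineq (A B X Y c d r : ℝ) (hr : 0 < r) (hd : d = c * r) (hcd : c * d < 4)
    (h1 : 0 < -(X * A)) (h2 : 0 ≤ -(Y * B))
    (g1 : -(X * A) - Y * B + Y * d * A ≤ 0) (g2 : -(X * A) - Y * B + X * c * B ≤ 0) : False := by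
  -- multiply the two inequalities
  have e1 : 0 < -(Y * d * A) := by linarith
  have e2 : 0 < -(X * c * B) := by linarith
  have k1 : -(Y * B) ≤ -(Y * d * A) + X * A := by linarith
  have k2 : -(X * A) ≤ -(X * c * B) + Y * B := by linarith
  have m := mul_le_mul k1 k2 h1.le (by linarith)
  -- A * B * (t X Y - d Y^2 - c X^2) ≥ 0
  have m' : 0 ≤ A * B * (c * d * (X * Y) - d * Y ^ 2 - c * X ^ 2) := by nlinarith
  have hA : A ≠ 0 := by rintro rfl; simp at h1
  have hX : X ≠ 0 := by rintro rfl; simp at h1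
  have hB : B ≠ 0 := by rintro rfl; simp at e2
  have hY : Y ≠ 0 := by rintro rfl; simp at e1
  have hc : c ≠ 0 := by rintro rfl; simp at e2
  -- c * A * B > 0
  have p : 0 < (Y * c * r * A) * (X * c * B) := by
    subst hd
    nlinarith
  have q : 0 < (X * A) * (Y * B) := by
    have : -(Y * B) ≠ 0 := by simp [hY, hB]
    have : 0 < -(Y * B) := lt_of_le_of_ne h2 this.symm
    nlinarith
  have hXY : 0 < X * A * (X * c * B) := by nlinarith
  have hcAB : 0 < c * (A * B) := by
    have : X * A * (X * c * B) = X ^ 2 * (c * (A * B)) := by ring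
    rw [this] at hXY
    exact pos_of_mul_pos_right hXY (sq_nonneg X) 
  have hQ : 0 < X ^ 2 - c * r * (X * Y) + r * Y ^ 2 := by
    subst hd
    have hrc : r * c ^ 2 < 4 := by nlinarith
    have hX2 : 0 < Y ^ 2 := by positivity
    have : 0 < r * Y ^ 2 * (4 - r * c ^ 2) := by
      apply mul_pos (by positivity); linarith
    nlinarith [sq_nonneg (2 * X - c * r * Y)]
  have : A * B * (c * d * (X * Y) - d * Y ^ 2 - c * X ^ 2)
      = - (c * (A * B) * (X ^ 2 - c * r * (X * Y) + r * Y ^ 2)) := by subst hd; ring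
  rw [this] at m'
  have := mul_pos hcAB hQ
  linarith

/-- The linear reflection. -/
def rf (a : V) : V ≃ₗᵢ[ℝ] V := (ℝ ∙ a)ᗮ.reflection

theorem rf_apply (a v : V) : rf a v = v - ⟪v, a⟫ • coroot a := by
  rw [rf, Submodule.reflection_orthogonal_apply, Submodule.reflection_singleton_apply, coroot,
    neg_sub, smul_smul, ← Nat.cast_smul_eq_nsmul ℝ, smul_smul, real_inner_comm,
    real_inner_self_eq_norm_sq]
  congr 2
  simp; ring

theorem rf_eq (a v : V) : rf a v = sAffFun a 0 v := by
  rw [rf_apply]; simp [sAffFun]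

theorem rf_rf (a v : V) : rf a (rf a v) = v := by
  simp [rf]

theorem inner_rf (a u v : V) : ⟪rf a u, v⟫ = ⟪u, v⟫ - ⟪u, coroot a⟫ * ⟪a, v⟫ := by
  rw [rf_apply, inner_sub_left, coroot, real_inner_smul_left, real_inner_smul_left,
    real_inner_smul_right]
  ring

/-- `s_{s_a b} = s_a s_b s_a`. -/
theorem rf_conj (a b v : V) : rf (rf a b) v = rf a (rf b (rf a v)) := by
  have h1 : ⟪v, rf a b⟫ = ⟪rf a v, b⟫ := by
    rw [← LinearIsometryEquiv.inner_map_map (rf a) v, rf_rf]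
    
  have h2 : coroot (rf a b) = rf a (coroot b) := by
    simp [coroot, LinearIsometryEquiv.inner_map_map]
  rw [rf_apply (rf a b), h1, h2, rf_apply b, map_sub, rf_rf, map_smul]

theorem sAff_apply (a : V) (k : ℝ) (v : V) : sAff a k v = rf a v + k • coroot a := by
  rw [rf_apply]
  show sAffFun a k v = _
  rw [sAffFun, sub_smul]; abel

theorem sAff_mul_self (a : V) (k : ℝ) : sAff a k * sAff a k = 1 := by
  ext v; exact sAffFun_involutive a k v

theorem sAff_inv (a : V) (k : ℝ) : (sAff a k)⁻¹ = sAff a k :=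
  inv_eq_of_mul_eq_one_left (sAff_mul_self a k)

theorem sAff_conj (a b : V) (k l c : ℝ) (hc : 2 * ⟪b, a⟫ / ⟪a, a⟫ = c) :
    sAff a k * sAff b l * sAff a k = sAff (rf a b) (l - k * c) := by
  ext v
  have h2 : coroot (rf a b) = rf a (coroot b) := by
    simp [coroot, LinearIsometryEquiv.inner_map_map]
  have h3 : rf a (coroot a) = - coroot a := by
    rw [coroot, map_smul, rf, Submodule.reflection_orthogonalComplement_singleton_eq_neg, smul_neg]
  have h4 : rf b (coroot a) = coroot a - c • coroot b := by
    rw [rf_apply, coroot, real_inner_smul_left, ← hc, real_inner_comm a b]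
    congr 2; ring
  simp only [Equiv.Perm.mul_apply, sAff_apply, rf_conj, map_add, map_smul, h4, map_sub, h3, h2]
  module

theorem sAff_neg (a : V) (k : ℝ) : sAff (-a) (-k) = sAff a k := by
  ext v
  show sAffFun _ _ _ = sAffFun _ _ _
  simp only [sAffFun, coroot, inner_neg_right, inner_neg_left, neg_neg]
  module

section Hur
variable {G : Type*} [Group G]

theorem HE_refl (l : List G) : HurwitzEquiv l l := Relation.EqvGen.refl _
theorem HE_trans {l m n : List G} (h : HurwitzEquiv l m) (h' : HurwitzEquiv m n) :
    HurwitzEquiv l n := Relation.EqvGen.trans _ _ _ h h'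
theorem HE_symm {l m : List G} (h : HurwitzEquiv l m) :
    HurwitzEquiv m l := Relation.EqvGen.symm _ _ h

theorem HE_append {l m : List G} (h : HurwitzEquiv l m) (p s : List G) :
    HurwitzEquiv (p ++ l ++ s) (p ++ m ++ s) := by
  induction h with
  | rel x y h =>
    obtain ⟨u, v, a, b, rfl, rfl⟩ := h
    exact Relation.EqvGen.rel _ _ ⟨p ++ u, v ++ s, a, b, by simp, by simp⟩
  | refl x => exact HE_refl _
  | symm x y _ ih => exact HE_symm ih
  | trans x y z _ _ ih1 ih2 => exact HE_trans ih1 ih2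

theorem HE_move (u v : List G) (a b : G) :
    HurwitzEquiv (u ++ a :: b :: v) (u ++ (a * b * a⁻¹) :: a :: v) :=
  Relation.EqvGen.rel _ _ ⟨u, v, a, b, rfl, rfl⟩

theorem HE_move' (u v : List G) (a b : G) :
    HurwitzEquiv (u ++ a :: b :: v) (u ++ b :: (b⁻¹ * a * b) :: v) := by
  refine HE_symm (Relation.EqvGen.rel _ _ ⟨u, v, b, b⁻¹ * a * b, rfl, ?_⟩)
  group
end Hur

/-- The tuple of affine reflections attached to a list of data. -/
def toR (L : List (V × ℤ)) : List (Equiv.Perm V) := L.map fun p => sAff p.1 (p.2 : ℝ)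

/-- The linear part of the product. -/
def lin (L : List (V × ℤ)) : V ≃ₗᵢ[ℝ] V := (L.map fun p => rf p.1).prod

theorem lin_nil (v : V) : lin [] v = v := rfl
theorem lin_cons (p : V × ℤ) (L : List (V × ℤ)) (v : V) : lin (p :: L) v = rf p.1 (lin L v) := by
  rw [lin, List.map_cons, List.prod_cons]; rfl
theorem lin_append (P L : List (V × ℤ)) (v : V) : lin (P ++ L) v = lin P (lin L v) := by
  rw [lin, List.map_append, List.prod_append]; rfl

/-- Conjugation of data. -/
theorem conj_data {Φ : Set V} (hΦ : IsCrystRootSystem Φ) (p q : V × ℤ) (hp : p.1 ∈ Φ)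
    (hq : q.1 ∈ Φ) : ∃ k : ℤ, rf p.1 q.1 ∈ Φ ∧
      sAff p.1 (p.2 : ℝ) * sAff q.1 (q.2 : ℝ) * sAff p.1 (p.2 : ℝ) = sAff (rf p.1 q.1) (k : ℝ) := by
  obtain ⟨c, hc⟩ := hΦ.cryst _ hp _ hq
  refine ⟨q.2 - p.2 * c, ?_, ?_⟩
  · rw [rf_eq]; exact hΦ.refl_mem _ hp _ hq
  · rw [sAff_conj _ _ _ _ _ hc]; push_cast; rfl

/-- Reachability of data lists, with roots inside `Φ ∩ U`. -/
structure Reach (Φ : Set V) (U : Submodule ℝ V) (L L' : List (V × ℤ)) : Prop where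
  mem : ∀ p ∈ L', p.1 ∈ Φ ∧ p.1 ∈ U
  len : L'.length = L.length
  he : HurwitzEquiv (toR L) (toR L')
  act : ∀ v, lin L' v = lin L v

theorem Reach.trans {Φ : Set V} {U : Submodule ℝ V} {L L' L'' : List (V × ℤ)}
    (h : Reach Φ U L L') (h' : Reach Φ U L' L'') : Reach Φ U L L'' :=
  ⟨h'.mem, h'.len.trans h.len, HE_trans h.he h'.he, fun v => (h'.act v).trans (h.act v)⟩

theorem rf_mem_sub (U : Submodule ℝ V) {a b : V} (ha : a ∈ U) (hb : b ∈ U) : rf a b ∈ U := by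
  rw [rf_apply, coroot]
  exact U.sub_mem hb (U.smul_mem _ (U.smul_mem _ ha))

theorem reach_move {Φ : Set V} (hΦ : IsCrystRootSystem Φ) (U : Submodule ℝ V)
    (P S : List (V × ℤ)) (a b : V × ℤ) (h : ∀ p ∈ P ++ a :: b :: S, p.1 ∈ Φ ∧ p.1 ∈ U) :
    ∃ k : ℤ, Reach Φ U (P ++ a :: b :: S) (P ++ (rf a.1 b.1, k) :: a :: S) := by
  have ha := h a (by simp)
  have hb := h b (by simp)
  obtain ⟨k, hk, hk'⟩ := conj_data hΦ a b ha.1 hb.1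
  refine ⟨k, ?_, by simp, ?_, ?_⟩
  · intro p hp
    simp only [List.mem_append, List.mem_cons] at hp
    rcases hp with hp | rfl | rfl | hp
    · exact h p (by simp [hp])
    · exact ⟨hk, rf_mem_sub U ha.2 hb.2⟩
    · exact ha
    · exact h p (by simp [hp])
  · have := HE_move (toR P) (toR S) (sAff a.1 (a.2 : ℝ)) (sAff b.1 (b.2 : ℝ))
    rw [sAff_inv, hk'] at this
    simpa [toR] using this
  · intro v
    simp only [lin_append, lin_cons, rf_conj, rf_rf]

theorem reach_move' {Φ : Set V} (hΦ : IsCrystRootSystem Φ) (U : Submodule ℝ V)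
    (P S : List (V × ℤ)) (a b : V × ℤ) (h : ∀ p ∈ P ++ a :: b :: S, p.1 ∈ Φ ∧ p.1 ∈ U) :
    ∃ k : ℤ, Reach Φ U (P ++ a :: b :: S) (P ++ b :: (rf b.1 a.1, k) :: S) := by
  have ha := h a (by simp)
  have hb := h b (by simp)
  obtain ⟨k, hk, hk'⟩ := conj_data hΦ b a hb.1 ha.1
  refine ⟨k, ?_, by simp, ?_, ?_⟩
  · intro p hp
    simp only [List.mem_append, List.mem_cons] at hp
    rcases hp with hp | rfl | rfl | hp
    · exact h p (by simp [hp])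
    · exact hb
    · exact ⟨hk, rf_mem_sub U hb.2 ha.2⟩
    · exact h p (by simp [hp])
  · have := HE_move' (toR P) (toR S) (sAff a.1 (a.2 : ℝ)) (sAff b.1 (b.2 : ℝ))
    rw [sAff_inv, hk'] at this
    simpa [toR] using this
  · intro v
    simp only [lin_append, lin_cons, rf_conj, rf_rf]

/-- The potential; depends only on the roots. -/
def pot (v : V) : List V → ℝ
  | [] => 0
  | a :: L => ⟪((a :: L).map rf).prod v, v⟫ + pot v L

/-- Potential of data. -/
def potD (v : V) (L : List (V × ℤ)) : ℝ := pot v (L.map Prod.fst)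

theorem potD_cons (v : V) (a : V × ℤ) (L : List (V × ℤ)) :
    potD v (a :: L) = ⟪lin (a :: L) v, v⟫ + potD v L := by
  simp [potD, pot, lin, Function.comp_def]

theorem potD_append_lt (v : V) (P M M' : List (V × ℤ)) (h : lin M v = lin M' v)
    (hlt : potD v M < potD v M') : potD v (P ++ M) < potD v (P ++ M') := by
  induction P with
  | nil => simpa
  | cons a P ih =>
    have : lin (a :: (P ++ M)) v = lin (a :: (P ++ M')) v := by
      simp only [lin_cons, lin_append, h]
    rw [List.cons_append, List.cons_append, potD_cons, potD_cons, this]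
    linarith

/-- Rank two step. -/
theorem rank_two (a b u v : V) (ha : a ≠ 0) (hb : b ≠ 0)
    (hab : ∀ c : ℝ, b ≠ c • a)
    (h : (⟪u, v⟫ < ⟪rf a u, v⟫ ∧ ⟪u, v⟫ ≤ ⟪rf b u, v⟫)) :
    ⟪u, v⟫ < ⟪rf a (rf b u), v⟫ ∨ ⟪u, v⟫ < ⟪rf b (rf a u), v⟫ := by
  by_contra! hcon
  obtain ⟨g1, g2⟩ := hcon
  obtain ⟨h1, h2⟩ := h
  have key : ∀ x y : V, ⟪rf x (rf y u), v⟫ = ⟪u, v⟫ - ⟪u, coroot x⟫ * ⟪x, v⟫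
      - ⟪u, coroot y⟫ * ⟪y, v⟫ + ⟪u, coroot y⟫ * ⟪y, coroot x⟫ * ⟪x, v⟫ := by
    intro x y
    rw [inner_rf, inner_rf, inner_rf]; ring
  rw [key] at g1 g2
  rw [inner_rf] at h1 h2
  have haa : 0 < ⟪a, a⟫ := real_inner_self_pos.2 ha
  have hbb : 0 < ⟪b, b⟫ := real_inner_self_pos.2 hb
  refine gain_ineq ⟪a, v⟫ ⟪b, v⟫ ⟪u, coroot a⟫ ⟪u, coroot b⟫ ⟪a, coroot b⟫ ⟪b, coroot a⟫
    (⟪b, b⟫ / ⟪a, a⟫) (div_pos hbb haa) ?_ ?_ (by linarith) (by linarith) (by linarith)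
    (by linarith)
  · simp only [coroot, real_inner_smul_right]
    rw [real_inner_comm a b]
    field_simp
  · simp only [coroot, real_inner_smul_right]
    rw [real_inner_comm a b]
    have hlt : ⟪a, b⟫ ^ 2 < ⟪a, a⟫ * ⟪b, b⟫ := by
      set c := ⟪a, b⟫ / ⟪a, a⟫ with hc
      have hne : b - c • a ≠ 0 := sub_ne_zero.2 (hab c)
      have := real_inner_self_pos.2 hne
      rw [inner_sub_left, inner_sub_right, inner_sub_right, real_inner_smul_left,
        real_inner_smul_left, real_inner_smul_right, real_inner_smul_right,
        real_inner_comm a b] at this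
      have hca : c * ⟪a, a⟫ = ⟪a, b⟫ := by rw [hc]; field_simp
      nlinarith
    have : 2 / ⟪b, b⟫ * ⟪a, b⟫ * (2 / ⟪a, a⟫ * ⟪a, b⟫) = 4 * (⟪a, b⟫ ^ 2 / (⟪a, a⟫ * ⟪b, b⟫)) := by
      field_simp; ring
    rw [this]
    have : ⟪a, b⟫ ^ 2 / (⟪a, a⟫ * ⟪b, b⟫) < 1 := (div_lt_one (by positivity)).2 hlt
    linarith

theorem valley (f : ℕ → ℝ) (m : ℕ) (hm : f m = f 0) (hj : ∃ j, j ≤ m ∧ f j < f 0) :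
    ∃ i, i + 2 ≤ m ∧ f (i + 1) < f i ∧ f (i + 1) ≤ f (i + 2) := by
  classical
  by_contra! hcon
  have hspec := Nat.find_spec hj
  set i := Nat.find hj with hi
  have hi0 : i ≠ 0 := by intro h0; rw [h0] at hspec; exact lt_irrefl _ hspec.2
  have hmin : ∀ j < i, j ≤ m → f 0 ≤ f j := by
    intro j hj' hjm
    have := Nat.find_min hj hj'
    by_contra! hc
    exact this ⟨hjm, hc⟩
  have step : ∀ j, i ≤ j + 1 → j + 1 ≤ m → f (j + 1) < f j ∧ f (j + 1) < f 0 := by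
    intro j
    induction j with
    | zero =>
      intro h1 h2
      have : i = 1 := by omega
      rw [this] at hspec
      exact ⟨hspec.2, hspec.2⟩
    | succ j ih =>
      intro h1 h2
      rcases Nat.lt_or_ge (j + 1) i with h | h
      · have : i = j + 1 + 1 := by omega
        have h3 := hmin (j + 1) h (by omega)
        rw [this] at hspec
        exact ⟨lt_of_lt_of_le hspec.2 h3, hspec.2⟩
      · have h3 := ih h (by omega)
        have h4 := hcon j (by omega) h3.1
        exact ⟨h4, h4.trans h3.2⟩
  obtain ⟨j, rfl⟩ : ∃ j, m = j + 1 := ⟨m - 1, by omega⟩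
  have := (step j (by omega) le_rfl).2
  linarith

/-- The tuple has two adjacent proportional roots. -/
def HasPair (L : List (V × ℤ)) : Prop :=
  ∃ (P S : List (V × ℤ)) (a b : V × ℤ) (c : ℝ), L = P ++ a :: b :: S ∧ b.1 = c • a.1

theorem improve {Φ : Set V} (hΦ : IsCrystRootSystem Φ) (U : Submodule ℝ V)
    (L : List (V × ℤ)) (hL : ∀ p ∈ L, p.1 ∈ Φ ∧ p.1 ∈ U) (v : V) (hv : lin L v = v)
    (hp : ¬ HasPair L) (ho : ∃ p ∈ L, ⟪v, p.1⟫ ≠ 0) :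
    ∃ L', Reach Φ U L L' ∧ potD v L < potD v L' := by
  let f : ℕ → ℝ := fun i => ⟪lin (L.drop i) v, v⟫
  have hf0 : f 0 = ⟪v, v⟫ := by simp [f, hv]
  have hfm : f L.length = f 0 := by rw [hf0]; simp [f, lin_nil]
  have hex : ∃ j, j ≤ L.length ∧ f j < f 0 := by
    by_contra! hcon
    have hfix : ∀ j, j ≤ L.length → lin (L.drop j) v = v := by
      intro j hj
      have h1 := hcon j hj
      rw [hf0] at h1
      have h2 : ‖lin (L.drop j) v‖ = ‖v‖ := LinearIsometryEquiv.norm_map _ _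
      have h3 : ‖lin (L.drop j) v - v‖ ^ 2 ≤ 0 := by
        rw [norm_sub_sq_real, h2, ← real_inner_self_eq_norm_sq]
        simp only [f] at h1
        linarith
      have h4 : ‖lin (L.drop j) v - v‖ = 0 := by
        have := sq_nonneg ‖lin (L.drop j) v - v‖
        exact pow_eq_zero_iff (two_ne_zero) |>.1 (le_antisymm h3 this)
      exact sub_eq_zero.1 (norm_eq_zero.1 h4)
    obtain ⟨p, hpL, hpo⟩ := ho
    obtain ⟨i, hi, rfl⟩ := List.mem_iff_getElem.1 hpL
    have h1 := hfix i hi.le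
    rw [List.drop_eq_getElem_cons hi, lin_cons, hfix (i + 1) hi, rf_apply, sub_eq_self,
      smul_eq_zero] at h1
    rcases h1 with h1 | h1
    · exact hpo h1
    · have hne := hΦ.ne_zero _ (hL _ hpL).1
      rw [coroot, smul_eq_zero] at h1
      rcases h1 with h1 | h1
      · have : ⟪(L[i]).1, (L[i]).1⟫ ≠ 0 := inner_self_ne_zero.2 hne
        simp [this] at h1
        exact hne h1
      · exact hne h1
  obtain ⟨i, hi, h1, h2⟩ := valley f L.length hfm hex
  have hdec : L = L.take i ++ L[i] :: L[i + 1] :: L.drop (i + 2) := by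
    rw [← List.drop_eq_getElem_cons, ← List.drop_eq_getElem_cons, List.take_append_drop]
  generalize hP : L.take i = P at hdec
  generalize hS : L.drop (i + 2) = S at hdec
  have hi1 : i + 1 < L.length := by omega
  have hi0 : i < L.length := by omega
  have hfi : f i = ⟪lin (L[i] :: L[i+1] :: S) v, v⟫ := by
    simp only [f]
    rw [List.drop_eq_getElem_cons hi0, List.drop_eq_getElem_cons hi1, hS]
  have hfi1 : f (i + 1) = ⟪lin (L[i+1] :: S) v, v⟫ := by
    simp only [f]
    rw [List.drop_eq_getElem_cons hi1, hS]
  have hfi2 : f (i + 2) = ⟪lin S v, v⟫ := by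
    simp only [f]; rw [hS]
  rw [hfi, hfi1] at h1
  rw [hfi1, hfi2] at h2
  generalize L[i] = a at *
  generalize L[i + 1] = b at *
  clear hfi hfi1 hfi2
  subst hdec
  have ha := hL a (by simp)
  have hb := hL b (by simp)
  have hab : ∀ c : ℝ, b.1 ≠ c • a.1 := fun c hc => hp ⟨P, S, a, b, c, rfl, hc⟩
  set u := lin (b :: S) v with hu
  have hSu : lin S v = rf b.1 u := by rw [hu, lin_cons, rf_rf]
  rw [lin_cons, ← hu] at h1
  rw [hSu] at h2
  rcases rank_two a.1 b.1 u v (hΦ.ne_zero _ ha.1) (hΦ.ne_zero _ hb.1) hab ⟨h1, h2⟩ with h | h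
  · obtain ⟨k, hk⟩ := reach_move hΦ U P S a b hL
    refine ⟨_, hk, potD_append_lt v P _ _ ?_ ?_⟩
    · simp only [lin_cons, rf_conj, rf_rf]
    · simp only [potD_cons, lin_cons, rf_conj, rf_rf]
      rw [hSu, rf_rf]; linarith
  · obtain ⟨k, hk⟩ := reach_move' hΦ U P S a b hL
    refine ⟨_, hk, potD_append_lt v P _ _ ?_ ?_⟩
    · simp only [lin_cons, rf_conj, rf_rf]
    · simp only [potD_cons, lin_cons, rf_conj, rf_rf]
      rw [hSu, rf_rf]; linarith

theorem maximize {Φ : Set V} (hΦ : IsCrystRootSystem Φ) (U : Submodule ℝ V)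
    (L : List (V × ℤ)) (hL : ∀ p ∈ L, p.1 ∈ Φ ∧ p.1 ∈ U) (v : V) :
    ∃ L', Reach Φ U L L' ∧ ∀ L'', Reach Φ U L' L'' → potD v L'' ≤ potD v L' := by
  have hfin : ({l : List V | l.length = L.length ∧ ∀ x ∈ l, x ∈ Φ}).Finite :=
    by
      have := hΦ.finite.to_subtype
      have h := (List.finite_length_eq Φ L.length).image (List.map Subtype.val)
      refine h.subset ?_
      rintro l ⟨hl, hm⟩
      refine ⟨l.attachWith (· ∈ Φ) hm, by simp [hl], by simp⟩
  have hfin2 : (potD v '' {L' | Reach Φ U L L'}).Finite := by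
    refine (hfin.image (pot v)).subset ?_
    rintro _ ⟨L', hL', rfl⟩
    refine ⟨L'.map Prod.fst, ⟨by simp [hL'.len], ?_⟩, rfl⟩
    intro x hx
    obtain ⟨p, hp, rfl⟩ := List.mem_map.1 hx
    exact (hL'.mem p hp).1
  obtain ⟨L', h1, h2⟩ := Set.Finite.exists_maximalFor' (potD v) _ hfin2
    ⟨L, ⟨hL, rfl, HE_refl _, fun _ => rfl⟩⟩
  refine ⟨L', h1, fun L'' h => ?_⟩
  by_contra! hc
  have := h2 (Reach.trans h1 h) hc.le
  linarith

theorem det_isom_fix [FiniteDimensional ℝ V] (g : V ≃ₗᵢ[ℝ] V)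
    (hg : LinearMap.det g.toLinearEquiv.toLinearMap = (-1) ^ (Module.finrank ℝ V + 1)) :
    ∃ v : V, v ≠ 0 ∧ g v = v := by
  let G : V →ₗ[ℝ] V := g.toLinearEquiv.toLinearMap
  have hadj : (LinearMap.adjoint (G - 1) : V →ₗ[ℝ] V) * G = -(G - 1) := by
    ext v
    refine ext_inner_right ℝ fun w => ?_
    have : ((LinearMap.adjoint (G - 1) : V →ₗ[ℝ] V) * G) v = LinearMap.adjoint (G - 1) (G v) := rfl
    rw [this, LinearMap.adjoint_inner_left]
    simp only [LinearMap.sub_apply, LinearMap.neg_apply, inner_sub_right, inner_neg_left,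
      inner_sub_left]
    have : ⟪G v, G w⟫ = ⟪v, w⟫ := g.inner_map_map v w
    rw [this]; simp
  have hdet : LinearMap.det (LinearMap.adjoint (G - 1)) = LinearMap.det (G - 1) := by
    let b := stdOrthonormalBasis ℝ V
    rw [← LinearMap.det_toMatrix b.toBasis, ← LinearMap.det_toMatrix b.toBasis,
      LinearMap.toMatrix_adjoint, Matrix.det_conjTranspose]
    simp
  have h0 : LinearMap.det (G - 1) = 0 := by
    have := congrArg LinearMap.det hadj
    rw [map_mul, hdet, hg, ← neg_one_smul ℝ (G - 1), LinearMap.det_smul, pow_succ] at this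
    have h1 : ((-1 : ℝ)) ^ Module.finrank ℝ V ≠ 0 := by simp
    have h2 : (-1 : ℝ) ^ Module.finrank ℝ V * LinearMap.det (G - 1) = 0 := by linarith
    exact (mul_eq_zero.1 h2).resolve_left h1
  have hk := (LinearMap.bot_lt_ker_of_det_eq_zero h0).ne'
  obtain ⟨v, hv, hv0⟩ := Submodule.exists_mem_ne_zero_of_ne_bot hk
  refine ⟨v, hv0, ?_⟩
  have : G v - v = 0 := hv
  exact sub_eq_zero.1 this

theorem det_lin [FiniteDimensional ℝ V] (L : List (V × ℤ)) (hL : ∀ p ∈ L, p.1 ≠ 0) :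
    LinearMap.det (lin L).toLinearEquiv.toLinearMap = (-1) ^ L.length := by
  induction L with
  | nil => 
    have : (lin ([] : List (V × ℤ))).toLinearEquiv.toLinearMap = LinearMap.id := by
      ext v; rfl
    simp [this]
  | cons a L ih =>
    have : (lin (a :: L)).toLinearEquiv.toLinearMap
        = (rf a.1).toLinearEquiv.toLinearMap * (lin L).toLinearEquiv.toLinearMap := by
      ext v; exact lin_cons a L v
    rw [this, map_mul, ih (fun p hp => hL p (by simp [hp]))]
    have h2 := Submodule.det_reflection (𝕜 := ℝ) (ℝ ∙ a.1)ᗮ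
    rw [Submodule.orthogonal_orthogonal, finrank_span_singleton (hL a (by simp))] at h2
    rw [List.length_cons, pow_succ']
    congr 1
    rw [← pow_one (-1 : ℝ), ← h2]
    rfl

theorem lin_mem (U : Submodule ℝ V) (L : List (V × ℤ)) (hL : ∀ p ∈ L, p.1 ∈ U) (v : V)
    (hv : v ∈ U) : lin L v ∈ U := by
  induction L with
  | nil => exact hv
  | cons a L ih =>
    rw [lin_cons]
    exact rf_mem_sub U (hL a (by simp)) (ih fun p hp => hL p (by simp [hp]))

theorem lin_orth (U : Submodule ℝ V) (L : List (V × ℤ)) (hL : ∀ p ∈ L, p.1 ∈ U) (v : V)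
    (hv : v ∈ Uᗮ) : lin L v = v := by
  induction L with
  | nil => rfl
  | cons a L ih =>
    rw [lin_cons, ih fun p hp => hL p (by simp [hp]), rf_apply,
      Submodule.inner_left_of_mem_orthogonal (hL a (by simp)) hv]
    simp

theorem exists_fixed [FiniteDimensional ℝ V] (U : Submodule ℝ V) (L : List (V × ℤ))
    (hL : ∀ p ∈ L, p.1 ∈ U) (h0 : ∀ p ∈ L, p.1 ≠ 0) (hlen : L.length = Module.finrank ℝ U + 1) :
    ∃ v ∈ U, v ≠ 0 ∧ lin L v = v := by
  let g : V ≃ₗᵢ[ℝ] V := lin L * U.reflection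
  have hg : LinearMap.det g.toLinearEquiv.toLinearMap = (-1) ^ (Module.finrank ℝ V + 1) := by
    have : g.toLinearEquiv.toLinearMap = (lin L).toLinearEquiv.toLinearMap *
        U.reflection.toLinearEquiv.toLinearMap := by ext v; rfl
    rw [this, map_mul, det_lin L h0]
    have h2 := Submodule.det_reflection (𝕜 := ℝ) U
    have h3 := Submodule.finrank_add_finrank_orthogonal U
    have h4 : LinearMap.det U.reflection.toLinearEquiv.toLinearMap
      = (-1 : ℝ) ^ Module.finrank ℝ Uᗮ := h2
    rw [h4, ← pow_add, hlen, ← h3]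
    congr 1; omega
  obtain ⟨v, hv0, hv⟩ := det_isom_fix g hg
  obtain ⟨y, hy, z, hz, rfl⟩ := Submodule.exists_add_mem_mem_orthogonal (K := U) v
  have hgy : g (y + z) = lin L y - z := by
    show lin L (U.reflection (y + z)) = _
    rw [map_add, Submodule.reflection_mem_subspace_eq_self hy,
      Submodule.reflection_mem_subspace_orthogonalComplement_eq_neg hz, map_add, map_neg,
      lin_orth U L hL z hz, sub_eq_add_neg]
  rw [hgy] at hv
  have hz2 : (2 : ℝ) • z ∈ U := by
    have : (2 : ℝ) • z = lin L y - y := by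
      rw [two_smul, sub_eq_iff_eq_add] at *
      rw [hv]; abel
    rw [this]; exact U.sub_mem (lin_mem U L hL y hy) hy
  have hzU : z ∈ U := by
    have := U.smul_mem (1 / 2 : ℝ) hz2
    rwa [smul_smul, show (1 / 2 : ℝ) * 2 = 1 by norm_num, one_smul] at this
  have hz0 : z = 0 := by
    have := Submodule.inner_right_of_mem_orthogonal hzU hz
    exact inner_self_eq_zero.1 this
  subst hz0
  refine ⟨y, hy, by simpa using hv0, by simpa using hv⟩

theorem main [FiniteDimensional ℝ V] {Φ : Set V} (hΦ : IsCrystRootSystem Φ) (d : ℕ) :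
    ∀ (U : Submodule ℝ V) (L : List (V × ℤ)), Module.finrank ℝ U = d →
    (∀ p ∈ L, p.1 ∈ Φ ∧ p.1 ∈ U) → d + 1 ≤ L.length →
    ∃ L', Reach Φ U L L' ∧ HasPair L' := by
  induction d using Nat.strong_induction_on with
  | _ d ih =>
  intro U L hU hL hlen
  let A := L.take (d + 1)
  let B := L.drop (d + 1)
  have hAB : L = A ++ B := (List.take_append_drop _ _).symm
  have hA : ∀ p ∈ A, p.1 ∈ Φ ∧ p.1 ∈ U := fun p hp => hL p (by rw [hAB]; simp [hp])
  have hAlen : A.length = d + 1 := by simp [A, hlen]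
  suffices ∃ A', Reach Φ U A A' ∧ HasPair A' by
    obtain ⟨A', hr, P, S, a, b, c, rfl, hc⟩ := this
    refine ⟨(P ++ a :: b :: S) ++ B, ⟨?_, ?_, ?_, ?_⟩, P, S ++ B, a, b, c, by simp, hc⟩
    · intro p hp
      rcases List.mem_append.1 hp with hp | hp
      · exact hr.mem p hp
      · exact hL p (by rw [hAB]; simp [hp])
    · rw [hAB, List.length_append, hr.len, List.length_append]
    · have := HE_append hr.he [] (toR B)
      rw [hAB]
      simpa [toR] using this
    · intro v
      rw [hAB, lin_append _ B, hr.act, lin_append]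
  obtain ⟨v, hvU, hv0, hv⟩ := exists_fixed U A (fun p hp => (hA p hp).2)
    (fun p hp => hΦ.ne_zero _ (hA p hp).1) (by rw [hU, hAlen])
  obtain ⟨A', hr, hmax⟩ := maximize hΦ U A hA v
  by_cases hpair : HasPair A'
  · exact ⟨A', hr, hpair⟩
  have horth : ∀ p ∈ A', ⟪v, p.1⟫ = 0 := by
    by_contra! hc
    obtain ⟨L'', h1, h2⟩ := improve hΦ U A' hr.mem v (by rw [hr.act, hv]) hpair hc
    have := hmax L'' h1
    linarith
  let U' : Submodule ℝ V := U ⊓ (ℝ ∙ v)ᗮ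
  have hlt : U' < U := by
    refine lt_of_le_of_ne inf_le_left fun h => ?_
    have : v ∈ U' := by rw [h]; exact hvU
    have := Submodule.mem_orthogonal_singleton_iff_inner_right.1 this.2
    exact hv0 (inner_self_eq_zero.1 this)
  have hlt' := Submodule.finrank_lt_finrank_of_lt hlt
  rw [hU] at hlt'
  obtain ⟨A'', hr', hp'⟩ := ih _ hlt' U' A' rfl
    (fun p hp => ⟨(hr.mem p hp).1, (hr.mem p hp).2,
      Submodule.mem_orthogonal_singleton_iff_inner_right.2 (horth p hp)⟩)
    (by rw [hr.len, hAlen]; omega)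
  refine ⟨A'', hr.trans ⟨fun p hp => ⟨(hr'.mem p hp).1, (hr'.mem p hp).2.1⟩, hr'.len, hr'.he,
    hr'.act⟩, hp'⟩

theorem to_end {Φ : Set V} (hΦ : IsCrystRootSystem Φ) (c : ℝ) (S : List (V × ℤ)) :
    ∀ (P : List (V × ℤ)) (a b : V × ℤ), (∀ p ∈ P ++ a :: b :: S, p.1 ∈ Φ ∧ p.1 ∈ (⊤ : Submodule ℝ V)) →
    b.1 = c • a.1 →
    ∃ P' a' b', Reach Φ ⊤ (P ++ a :: b :: S) (P' ++ [a', b']) ∧ b'.1 = c • a'.1 := by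
  induction S with
  | nil =>
    intro P a b h hc
    exact ⟨P, a, b, ⟨h, rfl, HE_refl _, fun _ => rfl⟩, hc⟩
  | cons s S ih =>
    intro P a b h hc
    obtain ⟨k, h1⟩ := reach_move' hΦ ⊤ (P ++ [a]) S b s (by simpa using h)
    obtain ⟨l, h2⟩ := reach_move' hΦ ⊤ P ((rf s.1 b.1, k) :: S) a s (by simpa using h1.mem)
    obtain ⟨P', a', b', h3, h4⟩ := ih (P ++ [s]) (rf s.1 a.1, l) (rf s.1 b.1, k)
      (by simpa using h2.mem) (by simp [hc])
    refine ⟨P', a', b', ?_, h4⟩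
    simp only [List.append_assoc, List.cons_append, List.nil_append] at h1 h2 h3
    exact h1.trans (h2.trans h3)

end S9

theorem statement_9 (Φ : Set V) (hΦ : IsCrystRootSystem Φ)
    (n : ℕ) (hrank : Module.finrank ℝ V = n)
    (x : Equiv.Perm V) (hx : x ∈ AffWeylGroup Φ)
    (m : ℕ) (hm : n + 1 ≤ m) (hlen : reflLength (AffReflections Φ) x = m)
    (β : Fin m → V) (hβ : ∀ i, β i ∈ Φ) (k : Fin m → ℤ)
    (hfac : (List.ofFn fun i => sAff (β i) (k i : ℝ)).prod = x) :
    ∃ (β' : Fin m → V) (k' : Fin m → ℤ),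
      (∀ i, β' i ∈ Φ) ∧
      (∀ i j : Fin m, m - 2 ≤ (i : ℕ) → m - 2 ≤ (j : ℕ) → β' i = β' j) ∧
      HurwitzEquiv (List.ofFn fun i => sAff (β i) (k i : ℝ))
        (List.ofFn fun i => sAff (β' i) (k' i : ℝ)) := by
  have hfd : FiniteDimensional ℝ V :=
    ⟨⟨hΦ.finite.toFinset, by rw [Set.Finite.coe_toFinset]; exact hΦ.spanning⟩⟩
  let L : List (V × ℤ) := List.ofFn fun i => (β i, k i)
  have hLR : S9.toR L = List.ofFn fun i => sAff (β i) (k i : ℝ) := by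
    simp [S9.toR, L, List.map_ofFn, Function.comp_def]
  have hL : ∀ p ∈ L, p.1 ∈ Φ ∧ p.1 ∈ (⊤ : Submodule ℝ V) := by
    intro p hp
    obtain ⟨i, rfl⟩ := (List.mem_ofFn' _ _).1 hp
    exact ⟨hβ i, trivial⟩
  obtain ⟨L₁, hr₁, P, S, a, b, c, rfl, hc⟩ :=
    S9.main hΦ n ⊤ L (by rw [finrank_top, hrank]) hL (by simp [L, hm])
  obtain ⟨P', a', b', hr₂, hc'⟩ := S9.to_end hΦ c S P a b hr₁.mem hc
  have hr := hr₁.trans hr₂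
  have ha' := (hr.mem a' (by simp)).1
  have hb' := (hr.mem b' (by simp)).1
  have hb'' : ∃ l : ℤ, sAff b'.1 (b'.2 : ℝ) = sAff a'.1 (l : ℝ) := by
    rcases hΦ.reduced _ ha' c (hc' ▸ hb') with rfl | rfl
    · exact ⟨b'.2, by rw [hc', one_smul]⟩
    · refine ⟨-b'.2, ?_⟩
      rw [hc', neg_one_smul, ← S9.sAff_neg a'.1]
      push_cast
      rw [neg_neg]
  obtain ⟨l, hl⟩ := hb''
  let M : List (V × ℤ) := P' ++ [a', (a'.1, l)]
  have hMlen : M.length = m := by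
    have := hr.len
    simp [L] at this
    simp [M, this]
  have hPlen : P'.length + 2 = m := by simpa [M] using hMlen
  have hMR : S9.toR M = S9.toR (P' ++ [a', b']) := by
    simp [S9.toR, M, hl]
  have hMem : ∀ p ∈ M, p.1 ∈ Φ := by
    intro p hp
    simp only [M, List.mem_append, List.mem_cons, List.not_mem_nil, or_false] at hp
    rcases hp with hp | rfl | rfl
    · exact (hr.mem p (by simp [hp])).1
    · exact ha'
    · exact ha'
  refine ⟨fun i => (M[(i : ℕ)]'(by rw [hMlen]; exact i.2)).1,
    fun i => (M[(i : ℕ)]'(by rw [hMlen]; exact i.2)).2, ?_, ?_, ?_⟩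
  · intro i
    exact hMem _ (List.getElem_mem _)
  · have key : ∀ (i : ℕ) (hi : i < M.length), m - 2 ≤ i → (M[i]).1 = a'.1 := by
      intro i hi h
      have : i = P'.length ∨ i = P'.length + 1 := by omega
      rcases this with rfl | rfl
      · simp [M]
      · simp [M]
    intro i j hi hj
    exact (key _ _ hi).trans (key _ _ hj).symm
  · have : (List.ofFn fun i : Fin m => sAff ((M[(i : ℕ)]'(by rw [hMlen]; exact i.2)).1)
        (((M[(i : ℕ)]'(by rw [hMlen]; exact i.2)).2 : ℤ) : ℝ)) = S9.toR M := by
      apply List.ext_getElem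
      · simp [S9.toR, hMlen]
      · intro i h1 h2
        simp [S9.toR]
    rw [this, hMR, ← hLR]
    exact hr.he



end
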